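/- Let n ≡ h (mod k) with 0 ≤ h < k and suppose k > (q^h - 1)/(q - 1). Then the maximum cardinality of a partial k-spread of F_q^n (a set of k-dimensional subspaces pairwise intersecting trivially) is (q^n - q^{k+h})/(q^k - 1) + 1, which equals Σ_{i=1}^{s-1} q^{ik+h} + 1 when n = sk + h. -/

import Mathlib

open Finset Module

theorem hole_count {F V ι : Type*} [Field F] [Fintype F] [AddCommGroup V] [Module F V]
    [Module.Finite F V] [Fintype ι] (W : ι → Submodule F V)
    (hW : ∀ i j, i ≠ j → W i ⊓ W j = ⊥) :
    (Nat.card {v : V // v ≠ 0 ∧ ∀ i, v ∉ W i} : ℤ)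
      + ∑ i, ((Fintype.card F : ℤ) ^ finrank F (W i) - 1) + 1
      = (Fintype.card F : ℤ) ^ finrank F V := by
  classical
  have : Finite V := Module.finite_of_finite F
  have := Fintype.ofFinite V
  have h1 : (univ : Finset V) =
      (univ.filter fun v : V => v ≠ 0 ∧ ∀ i, v ∉ W i) ∪
      ((univ.biUnion fun i => univ.filter fun v : V => v ∈ W i ∧ v ≠ 0) ∪ {0}) := by
    ext v
    simp only [mem_univ, mem_union, mem_filter, mem_biUnion, mem_singleton, true_and, true_iff]
    grind
  have h2 := congrArg Finset.card h1
  rw [card_union_of_disjoint, card_union_of_disjoint, card_biUnion, card_univ,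
    Module.card_eq_pow_finrank (K := F) (V := V)] at h2
  · have h3 : ∀ i, (#(univ.filter fun v : V => v ∈ W i ∧ v ≠ 0) : ℤ)
        = (Fintype.card F : ℤ) ^ finrank F (W i) - 1 := by
      intro i
      have h4 : #(univ.filter fun v : V => v ∈ W i ∧ v ≠ 0) + 1
          = Fintype.card F ^ finrank F (W i) := by
        rw [← Module.card_eq_pow_finrank (K := F) (V := W i), Fintype.card_subtype]
        have : (univ.filter fun v : V => v ∈ W i)
          = insert 0 (univ.filter fun v : V => v ∈ W i ∧ v ≠ 0) := by
          ext v
          by_cases hv : v = 0 <;> simp [hv]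
        rw [this, card_insert_of_notMem (by simp)]
      have h5 : ((#(univ.filter fun v : V => v ∈ W i ∧ v ≠ 0) + 1 : ℕ) : ℤ)
          = ((Fintype.card F ^ finrank F (W i) : ℕ) : ℤ) := by rw [h4]
      push_cast at h5
      linarith
    rw [Nat.card_eq_fintype_card, Fintype.card_subtype, ← Finset.sum_congr rfl (fun i _ => h3 i)]
    rw [card_singleton] at h2
    have h6 := congrArg (Nat.cast : ℕ → ℤ) h2
    push_cast at h6
    linarith
  · intro i _ j _ hij
    rw [Function.onFun, Finset.disjoint_left]
    intro v hv hv'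
    simp only [mem_filter, mem_univ, true_and] at hv hv'
    have : v ∈ W i ⊓ W j := ⟨hv.1, hv'.1⟩
    rw [hW i j hij] at this
    exact hv.2 (by simpa using this)
  · rw [Finset.disjoint_left]
    intro v hv
    simp only [mem_biUnion, mem_filter, mem_univ, true_and] at hv
    simp only [mem_singleton]
    grind
  · rw [Finset.disjoint_left]
    intro v hv
    simp only [mem_filter, mem_univ, true_and] at hv
    simp only [mem_union, mem_biUnion, mem_filter, mem_univ, true_and, mem_singleton]
    grind

theorem pow_sub_dvd (q a c : ℕ) (h : c ≤ a) : ((q:ℤ) - 1) * q ^ c ∣ (q:ℤ) ^ a - q ^ c := by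
  obtain ⟨d, rfl⟩ := Nat.exists_eq_add_of_le h
  rw [pow_add, show (q:ℤ)^c * q^d - q^c = (q^d-1) * q^c by ring]
  exact mul_dvd_mul_right (by simpa using sub_dvd_pow_sub_pow (q:ℤ) 1 d) _

theorem hole_dvd {F V ι : Type*} [Field F] [Fintype F] [AddCommGroup V] [Module F V]
    [Module.Finite F V] [Fintype ι] (W : ι → Submodule F V)
    (hW : ∀ i j, i ≠ j → W i ⊓ W j = ⊥) (c r : ℕ) (hc : ∀ i, c ≤ finrank F (W i))
    (hι : Fintype.card ι = 2 + Fintype.card F ^ c * r) :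
    ((Fintype.card F : ℤ) - 1) * (Fintype.card F : ℤ) ^ c ∣
    (Nat.card {v : V // v ≠ 0 ∧ ∀ i, v ∉ W i} : ℤ) + (Fintype.card F : ℤ) ^ c - 1 := by
  have h1 := hole_count W hW
  set q := Fintype.card F
  have hne : Nonempty ι := by
    rw [← Fintype.card_pos_iff]; omega
  have hV : c ≤ finrank F V := (hc hne.some).trans (Submodule.finrank_le _)
  have hs : ((q : ℤ) - 1) * (q : ℤ) ^ c ∣ ∑ i, ((q:ℤ) ^ finrank F (W i) - q ^ c) :=
    Finset.dvd_sum fun i _ => pow_sub_dvd q _ c (hc i)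
  have h2 := pow_sub_dvd q _ c hV
  have h3 : ((q : ℤ) - 1) * (q : ℤ) ^ c ∣ ((q:ℤ)^c - 1) * (q^c * r) := by
    rw [← mul_assoc]
    exact Dvd.dvd.mul_right
      (mul_dvd_mul_right (by simpa using sub_dvd_pow_sub_pow (q:ℤ) 1 c) _) _
  have h4 := (h2.sub hs).sub h3
  refine h4.trans (dvd_of_eq (Eq.symm ?_))
  simp only [Finset.sum_sub_distrib, Finset.sum_const, Finset.card_univ, hι, nsmul_eq_mul] at h1 ⊢
  push_cast at h1 ⊢
  linear_combination h1

theorem exists_hyperplane {F V : Type*} [Field F] [Fintype F] [AddCommGroup V] [Module F V]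
    [Module.Finite F V] (hV : 0 < finrank F V) (P : V → Prop) (hP : ¬ P 0) :
    ∃ f : Module.Dual F V, f ≠ 0 ∧
      Fintype.card F * Nat.card {v : V // P v ∧ f v = 0} ≤ Nat.card {v : V // P v} := by
  classical
  have : Finite V := Module.finite_of_finite F
  have := Fintype.ofFinite V
  have : Finite (Module.Dual F V) := Module.finite_of_finite F
  have := Fintype.ofFinite (Module.Dual F V)
  by_contra! hcon
  simp only [Nat.card_eq_fintype_card, Fintype.card_subtype] at hcon
  set q := Fintype.card F
  set A := #(univ.filter P)
  have hq : 1 < q := Fintype.one_lt_card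
  -- double count
  have h1 : ∑ f : Module.Dual F V, #(univ.filter fun v => P v ∧ f v = 0)
      = ∑ v ∈ univ.filter P, #(univ.filter fun f : Module.Dual F V => f v = 0) := by
    simp only [Finset.card_filter, Finset.sum_filter]
    rw [Finset.sum_comm]
    refine Finset.sum_congr rfl fun v _ => ?_
    by_cases hv : P v <;> simp [hv]
  have h2 : ∀ v ∈ univ.filter P, q * #(univ.filter fun f : Module.Dual F V => f v = 0)
      = q ^ finrank F V := by
    intro v hv
    have hv0 : v ≠ 0 := by
      rintro rfl; exact hP (by simpa using hv)
    have hne : Module.Dual.eval F V v ≠ 0 := by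
      rwa [Ne, Module.eval_apply_eq_zero_iff]
    have h3 := Module.Dual.finrank_ker_add_one_of_ne_zero hne
    rw [Subspace.dual_finrank_eq] at h3
    have h4 := Module.card_eq_pow_finrank (K := F) (V := LinearMap.ker (Module.Dual.eval F V v))
    rw [Fintype.card_subtype] at h4
    simp only [LinearMap.mem_ker, Module.Dual.eval_apply] at h4
    rw [h4, ← h3, pow_succ, mul_comm]
  have h3 : q * ∑ f : Module.Dual F V, #(univ.filter fun v => P v ∧ f v = 0)
      = A * q ^ finrank F V := by
    rw [h1, Finset.mul_sum, Finset.sum_congr rfl h2, Finset.sum_const, smul_eq_mul]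
  have hD : Fintype.card (Module.Dual F V) = q ^ finrank F V := by
    rw [Module.card_eq_pow_finrank (K := F), Subspace.dual_finrank_eq]
  have hbig : q ^ finrank F V ≥ 2 := by
    calc q ^ finrank F V ≥ q ^ 1 := Nat.pow_le_pow_right (by omega) hV
      _ ≥ 2 := by rw [pow_one]; omega
  rw [Finset.mul_sum, ← Finset.add_sum_erase _ _ (mem_univ 0)] at h3
  have h4 : ∑ f ∈ univ.erase (0 : Module.Dual F V), (A + 1)
      ≤ ∑ f ∈ univ.erase (0 : Module.Dual F V), q * #(univ.filter fun v => P v ∧ f v = 0) := by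
    refine Finset.sum_le_sum fun f hf => ?_
    exact hcon f (Finset.ne_of_mem_erase hf)
  rw [Finset.sum_const, card_erase_of_mem (mem_univ _), card_univ, hD, smul_eq_mul] at h4
  have h5 : #(univ.filter fun v : V => P v ∧ (0 : Module.Dual F V) v = 0) = A := by simp [A]
  rw [h5] at h3
  obtain ⟨d, hd⟩ := Nat.exists_eq_add_of_le hbig
  rw [hd] at h3 h4
  simp only [show 2 + d - 1 = d + 1 by omega] at h4
  nlinarith [Nat.zero_le (A * q), Nat.mul_le_mul_left A hq.le]

theorem main_ind {F : Type*} [Field F] [Fintype F] {ι : Type*} [Fintype ι] (t : ℕ) :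
    ∀ (V : Type _) [AddCommGroup V] [Module F V] [Module.Finite F V] (W : ι → Submodule F V)
      (_ : ∀ i j, i ≠ j → W i ⊓ W j = ⊥) (c r : ℕ) (_ : ∀ i, c ≤ finrank F (W i))
      (_ : Fintype.card ι = 2 + Fintype.card F ^ c * r) (_ : t < c)
      (_ : (Nat.card {v : V // v ≠ 0 ∧ ∀ i, v ∉ W i} : ℤ) + (Fintype.card F : ℤ) ^ c - 1 ≤
        ((Fintype.card F : ℤ) - 1) * (Fintype.card F : ℤ) ^ c * t), False := by
  have hq : 1 < Fintype.card F := Fintype.one_lt_card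
  induction t with
  | zero =>
    intro V _ _ _ W hW c r hc hι ht hM
    have : (1:ℤ) < (Fintype.card F : ℤ) ^ c := one_lt_pow₀ (by exact_mod_cast hq) (by omega)
    simp only [Nat.cast_zero, mul_zero] at hM
    have : (0:ℤ) ≤ (Nat.card {v : V // v ≠ 0 ∧ ∀ i, v ∉ W i} : ℤ) := by positivity
    linarith
  | succ t ih =>
    intro V _ _ _ W hW c r hc hι ht hM
    have hne : Nonempty ι := by
      rw [← Fintype.card_pos_iff]; omega
    have hV : c ≤ finrank F V := (hc hne.some).trans (Submodule.finrank_le _)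
    obtain ⟨f, hf, hA⟩ := exists_hyperplane (F := F) (V := V) (by omega)
      (fun v => v ≠ 0 ∧ ∀ i, v ∉ W i) (by simp)
    obtain ⟨c, rfl⟩ : ∃ d, c = d + 1 := ⟨c - 1, by omega⟩
    have hW' : ∀ i j, i ≠ j → (W i).comap (LinearMap.ker f).subtype ⊓
        (W j).comap (LinearMap.ker f).subtype = ⊥ := by
      intro i j hij
      rw [← Submodule.comap_inf, hW i j hij]
      simp
    have hc' : ∀ i, c ≤ finrank F ((W i).comap (LinearMap.ker f).subtype) := by
      intro i
      have h1 := Submodule.finrank_sup_add_finrank_inf_eq (LinearMap.ker f) (W i)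
      have h2 := Module.Dual.finrank_ker_add_one_of_ne_zero hf
      have h3 := Submodule.finrank_le (LinearMap.ker f ⊔ W i)
      have h4 : finrank F ((W i).comap (LinearMap.ker f).subtype)
          = finrank F ↥(LinearMap.ker f ⊓ W i) := by
        rw [← Submodule.map_comap_subtype]
        exact (Submodule.equivMapOfInjective _ (Submodule.injective_subtype _) _).finrank_eq
      have := hc i
      omega
    have hι' : Fintype.card ι = 2 + Fintype.card F ^ c * (Fintype.card F * r) := by
      rw [hι, pow_succ]; ring
    refine ih (LinearMap.ker f) (fun i => (W i).comap (LinearMap.ker f).subtype) hW' c _ hc' hι'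
      (by omega) ?_
    have hcard : Nat.card {v : LinearMap.ker f // v ≠ 0 ∧
          ∀ i, v ∉ (W i).comap (LinearMap.ker f).subtype}
        = Nat.card {v : V // (v ≠ 0 ∧ ∀ i, v ∉ W i) ∧ f v = 0} := by
      refine Nat.card_congr ⟨fun v => ⟨v.1.1, ⟨by simpa using v.2.1, by simpa using v.2.2⟩, v.1.2⟩,
        fun v => ⟨⟨v.1, v.2.2⟩, by simpa [Subtype.ext_iff] using v.2.1.1, by simpa using v.2.1.2⟩,
        fun _ => rfl, fun _ => rfl⟩
    obtain ⟨t', ht'⟩ := hole_dvd _ hW' c _ hc' hι'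
    rw [ht']
    rw [hcard] at ht'
    set q := Fintype.card F
    have hqz : (1:ℤ) < q := by exact_mod_cast hq
    have hpos : 0 < ((q:ℤ) - 1) * (q:ℤ)^c := by
      have := pow_pos (show (0:ℤ) < q by linarith) c
      apply mul_pos <;> linarith
    have hA' : (q:ℤ) * (Nat.card {v : V // (v ≠ 0 ∧ ∀ i, v ∉ W i) ∧ f v = 0} : ℤ)
      ≤ Nat.card {v : V // v ≠ 0 ∧ ∀ i, v ∉ W i} := by exact_mod_cast hA
    have hlt : ((q:ℤ) * (((q:ℤ) - 1) * (q:ℤ)^c)) * t' <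
        ((q:ℤ) * (((q:ℤ) - 1) * (q:ℤ)^c)) * ((t:ℤ)+1) := by
      rw [mul_assoc, ← ht']
      rw [pow_succ] at hM
      push_cast at hM
      linarith
    have := lt_of_mul_lt_mul_left hlt (by nlinarith)
    exact mul_le_mul_of_nonneg_left (by linarith) hpos.le


theorem spread_step {F : Type*} [Field F] [Fintype F] (k m N : ℕ) (hk : 0 < k) (hkm : k ≤ m)
    (hG : ∃ (ι : Type) (_ : Fintype ι) (W : ι → Submodule F (Fin m → F)),
      Fintype.card ι = N ∧ (∀ i, finrank F (W i) = k) ∧ ∀ i j, i ≠ j → W i ⊓ W j = ⊥) :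
    ∃ (ι : Type) (_ : Fintype ι) (W : ι → Submodule F (Fin (k + m) → F)),
      Fintype.card ι = Fintype.card F ^ m + N ∧ (∀ i, finrank F (W i) = k) ∧
        ∀ i j, i ≠ j → W i ⊓ W j = ⊥ := by
  obtain ⟨ι, _, W, hN, hW, hd⟩ := hG
  have : NeZero m := ⟨by omega⟩
  obtain ⟨p, hp⟩ := CharP.exists F
  have : Fact p.Prime := ⟨CharP.char_is_prime F p⟩
  let L := FiniteField.Extension F p m
  have hL : finrank F L = m := FiniteField.finrank_extension F p m
  have := Fintype.ofFinite L
  let b : Basis (Fin m) F L := finBasisOfFinrankEq F L hL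
  let g : (Fin k → F) →ₗ[F] L := Fintype.linearCombination F (fun i : Fin k => b (Fin.castLE hkm i))
  have hg : Function.Injective g := by
    apply LinearIndependent.fintypeLinearCombination_injective
    exact b.linearIndependent.comp _ (Fin.castLE_injective hkm)
  let e1 : (Fin m → F) ≃ₗ[F] L := LinearEquiv.ofFinrankEq _ _ (by simp [hL])
  let e : ((Fin k → F) × L) ≃ₗ[F] (Fin (k + m) → F) :=
    LinearEquiv.ofFinrankEq _ _ (by simp [hL])
  let γ : L → (Fin k → F) →ₗ[F] (Fin k → F) × L := fun a =>
    LinearMap.prod LinearMap.id ((LinearMap.mulLeft F a).comp g)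
  have hγ : ∀ a, Function.Injective (γ a) := by
    intro a x y hxy
    exact congrArg Prod.fst hxy
  let δ : (Fin m → F) →ₗ[F] (Fin k → F) × L := (LinearMap.inr F _ _).comp e1.toLinearMap
  have hδ : Function.Injective δ := by
    intro x y hxy
    exact e1.injective (congrArg Prod.snd hxy)
  let W' : L ⊕ ι → Submodule F ((Fin k → F) × L) :=
    Sum.elim (fun a => LinearMap.range (γ a)) (fun i => (W i).map δ)
  have hgd : ∀ a i, LinearMap.range (γ a) ⊓ (W i).map δ = ⊥ := by
    intro a i
    rw [eq_bot_iff]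
    rintro v ⟨⟨x, rfl⟩, ⟨y, _, hy⟩⟩
    have : (0 : Fin k → F) = x := congrArg Prod.fst hy
    subst this
    simp
  have hd' : ∀ i j, i ≠ j → W' i ⊓ W' j = ⊥ := by
    rintro (a | i) (a' | j) hij
    · rw [eq_bot_iff]
      rintro v ⟨⟨x, rfl⟩, ⟨y, hy⟩⟩
      have h1 : y = x := congrArg Prod.fst hy
      subst h1
      have h2 : a' * g y = a * g y := congrArg Prod.snd hy
      have h3 : g y = 0 := by
        by_contra h
        exact hij (by rw [mul_right_cancel₀ h h2])
      have h4 : y = 0 := hg (by rw [h3, map_zero])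
      subst h4
      simp
    · exact hgd a j
    · rw [inf_comm]; exact hgd a' i
    · change (W i).map δ ⊓ (W j).map δ = ⊥
      rw [← Submodule.map_inf _ hδ, hd i j (fun h => hij (by rw [h])), Submodule.map_bot]
  have hf' : ∀ i, finrank F (W' i) = k := by
    rintro (a | i)
    · exact (LinearMap.finrank_range_of_inj (hγ a)).trans (by simp)
    · exact (Submodule.equivMapOfInjective _ hδ _).finrank_eq.symm.trans (hW i)
  refine ⟨L ⊕ ι, inferInstance, fun i => (W' i).map e.toLinearMap, ?_, ?_, ?_⟩
  · rw [Fintype.card_sum, hN, Module.card_eq_pow_finrank (K := F) (V := L), hL]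
  · intro i
    exact (LinearEquiv.finrank_map_eq e (W' i)).trans (hf' i)
  · intro i j hij
    rw [← Submodule.map_inf _ e.injective, hd' i j hij, Submodule.map_bot]

theorem spread_exists {F : Type*} [Field F] [Fintype F] (k h : ℕ) (hk : 0 < k) (s : ℕ) :
    ∃ (ι : Type) (_ : Fintype ι) (W : ι → Submodule F (Fin ((s + 1) * k + h) → F)),
      Fintype.card ι = (∑ i ∈ Finset.Icc 1 s, Fintype.card F ^ (i * k + h)) + 1 ∧
      (∀ i, finrank F (W i) = k) ∧ ∀ i j, i ≠ j → W i ⊓ W j = ⊥ := by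
  induction s with
  | zero =>
    have hle : k ≤ (0 + 1) * k + h := by omega
    let g : (Fin k → F) →ₗ[F] (Fin ((0 + 1) * k + h) → F) :=
      Fintype.linearCombination F (fun i : Fin k => Pi.basisFun F _ (Fin.castLE hle i))
    have hg : Function.Injective g := by
      apply LinearIndependent.fintypeLinearCombination_injective
      exact (Pi.basisFun F _).linearIndependent.comp _ (Fin.castLE_injective hle)
    refine ⟨Unit, inferInstance, fun _ => LinearMap.range g, by simp, ?_, ?_⟩
    · intro _
      exact (LinearMap.finrank_range_of_inj hg).trans (by simp)
    · intro i j hij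
      exact (hij rfl).elim
  | succ s ih =>
    have := spread_step k ((s + 1) * k + h) _ hk (by nlinarith) ih
    rw [Finset.sum_Icc_succ_top (by omega)]
    rw [show (s + 1 + 1) * k + h = k + ((s + 1) * k + h) by ring]
    obtain ⟨ι, i1, W, h1, h2⟩ := this
    exact ⟨ι, i1, W, h1.trans (by rw [add_assoc]; omega), h2⟩

theorem sum_formula (q k h s : ℕ) (hq : 1 < q) (hk : 0 < k) :
    (q ^ k - 1) * (∑ i ∈ Finset.Icc 1 s, q ^ (i * k + h)) + q ^ (k + h) = q ^ ((s + 1) * k + h) := by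
  have h1 : 1 ≤ q ^ k := Nat.one_le_pow _ _ (by omega)
  induction s with
  | zero => simp
  | succ s ih =>
    rw [Finset.sum_Icc_succ_top (by omega), mul_add, add_right_comm, ih]
    obtain ⟨d, hd⟩ := Nat.exists_eq_add_of_le h1
    rw [show (s + 1 + 1) * k + h = k + ((s + 1) * k + h) by ring, pow_add q k, hd]
    simp only [Nat.add_sub_cancel_left]
    ring

theorem sum_dvd (q k h s : ℕ) :
    ∃ r, ∑ i ∈ Finset.Icc 1 s, q ^ (i * k + h) = q ^ k * r := by
  refine Finset.dvd_sum fun i hi => pow_dvd_pow q ?_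
  have := (Finset.mem_Icc.1 hi).1
  nlinarith

theorem stmt9 {𝔽 : Type*} [Field 𝔽] [Fintype 𝔽] {n s k h : ℕ}
    (q : ℕ) (hq : q = Fintype.card 𝔽)
    (hs : 1 ≤ s) (hn : n = s * k + h) (hh : h < k)
    (hk : (q ^ h - 1) / (q - 1) < k) :
    IsGreatest {m : ℕ | ∃ S : Set (Submodule 𝔽 (Fin n → 𝔽)),
        (∀ U ∈ S, Module.finrank 𝔽 ↥U = k) ∧
        (∀ U ∈ S, ∀ V ∈ S, U ≠ V → U ⊓ V = ⊥) ∧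
        S.ncard = m}
      ((q ^ n - q ^ (k + h)) / (q ^ k - 1) + 1) ∧
    (q ^ n - q ^ (k + h)) / (q ^ k - 1) + 1
      = (∑ i ∈ Finset.Icc 1 (s - 1), q ^ (i * k + h)) + 1 := by
  obtain ⟨s, rfl⟩ : ∃ d, s = d + 1 := ⟨s - 1, by omega⟩
  have hq1 : 1 < q := by rw [hq]; exact Fintype.one_lt_card
  have hk0 : 0 < k := by omega
  have hsum := sum_formula q k h s hq1 hk0
  have hqk : 1 < q ^ k := Nat.one_lt_pow (by omega) hq1
  have heq : (q ^ n - q ^ (k + h)) / (q ^ k - 1) + 1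
      = (∑ i ∈ Finset.Icc 1 s, q ^ (i * k + h)) + 1 := by
    rw [hn, ← hsum, Nat.add_sub_cancel, Nat.mul_div_cancel_left _ (by omega)]
  refine ⟨?_, by simpa using heq⟩
  rw [heq]
  subst hn
  constructor
  · obtain ⟨ι, _, W, hc, hf, hd⟩ := spread_exists (F := 𝔽) k h hk0 s
    have hinj : Function.Injective W := by
      intro i j hij
      by_contra hne
      have h1 := hd i j hne
      rw [← hij, inf_idem] at h1
      have h2 := hf i
      rw [h1, finrank_bot] at h2
      omega
    refine ⟨Set.range W, ?_, ?_, ?_⟩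
    · rintro _ ⟨i, rfl⟩; exact hf i
    · rintro _ ⟨i, rfl⟩ _ ⟨j, rfl⟩ hij
      exact hd i j (fun h => hij (by rw [h]))
    · rw [← Set.image_univ, Set.ncard_image_of_injective _ hinj, Set.ncard_univ,
        Nat.card_eq_fintype_card, hc, hq]
  · rintro m ⟨S, hf, hd, rfl⟩
    by_contra! hlt
    obtain ⟨T, hTS, hT⟩ := Set.exists_subset_card_eq (Nat.succ_le_of_lt hlt)
    have hfin : Finite T := Set.finite_of_ncard_ne_zero (by omega)
    have := Fintype.ofFinite T
    have hTc : Fintype.card T = (∑ i ∈ Finset.Icc 1 s, q ^ (i * k + h)) + 2 := by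
      rw [← Nat.card_eq_fintype_card, Nat.card_coe_set_eq, hT]
    obtain ⟨r, hr⟩ := sum_dvd q k h s
    have hdisj : ∀ i j : T, i ≠ j → i.1 ⊓ j.1 = ⊥ := fun i j hij =>
      hd _ (hTS i.2) _ (hTS j.2) (fun h => hij (Subtype.ext h))
    have hfr : ∀ i : T, finrank 𝔽 (i : Submodule 𝔽 (Fin ((s + 1) * k + h) → 𝔽)) = k :=
      fun i => hf _ (hTS i.2)
    refine main_ind (F := 𝔽) ((q ^ h - 1) / (q - 1)) (Fin ((s + 1) * k + h) → 𝔽)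
      (fun i : T => i.1) hdisj k r (fun i => (hfr i).ge) ?_ hk ?_
    · rw [hTc, hr, hq, add_comm]
    · have h1 := hole_count (fun i : T => i.1) hdisj
      simp only [hfr, Finset.sum_const, Finset.card_univ, hTc, nsmul_eq_mul, ← hq,
        finrank_fin_fun] at h1 ⊢
      have h2 : (q - 1) * ((q ^ h - 1) / (q - 1)) = q ^ h - 1 :=
        Nat.mul_div_cancel' (by simpa using Nat.sub_dvd_pow_sub_pow q 1 h)
      have h3 : ((q:ℤ) - 1) * (((q ^ h - 1) / (q - 1) : ℕ) : ℤ) = (q:ℤ) ^ h - 1 := by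
        have h4 := congrArg (Nat.cast : ℕ → ℤ) h2
        rw [Nat.cast_mul, Nat.cast_sub hq1.le, Nat.cast_sub (Nat.one_le_pow _ _ (by omega))] at h4
        simpa using h4
      have h5 := congrArg (Nat.cast : ℕ → ℤ) hsum
      rw [Nat.cast_add, Nat.cast_mul, Nat.cast_sub hqk.le] at h5
      rw [mul_right_comm, h3]
      push_cast at h1 h5 ⊢
      rw [pow_add _ k h] at h5
      apply le_of_eq
      linear_combination h1 - h5
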